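/- arXiv:2007.08283 — 2 statements merged into one kernel-verified Lean document; each statement's English description precedes it below -/
import Mathlib

section
/- Let X̃ be a replacement variable for X_j relative to G, write Ŷ_rep = f(X̃, X_U, X_G), and assume the law of (X_j, X_U, X_G) under μ is absolutely continuous with respect to the law of (X̃, X_U, X_G) under μ. If RFI_j^G ≠ 0, then X̃ is NOT conditionally independent of Ŷ_rep given (X_U, X_G) under μ (model-level implication of nonzero relative feature importance). -/
open MeasureTheory ProbabilityTheory
open scoped ProbabilityTheory

/-!
Write `W = (X_U, X_G)` and `Ŷ = f(X̃, W)`. If `X̃` were conditionally independent of `Ŷ` given `W`,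
then so would `(X̃, W)` be, and hence so would `Ŷ = f(X̃, W)` itself. A conditionally
self-independent event has conditional probability `0` or `1`, so it is almost surely an event of
`σ(W)`. Thus under the law of `(X̃, W)` the preimage under `f` of each measurable set depends only
on the second coordinate; by absolute continuity the same holds under the law of `(X_j, W)`.
Consequently `f(X̃, W)` and `f(X_j, W)` almost surely lie in the same measurable sets, the two
losses agree almost surely, and the relative feature importance vanishes.
-/

section Conditioning

variable {Ω α β γ : Type*} {m mΩ : MeasurableSpace Ω} {μ : Measure Ω} [IsFiniteMeasure μ]
  [MeasurableSpace α] [MeasurableSpace β] [MeasurableSpace γ] {s t : Set Ω}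

lemma condExp_inter_ae_eq_indicator (hs : MeasurableSet s) (ht : MeasurableSet[m] t) :
    μ⟦s ∩ t | m⟧ =ᵐ[μ] t.indicator (μ⟦s | m⟧) := by
  rw [Set.inter_comm, ← Set.indicator_indicator]
  exact condExp_indicator ((integrable_const 1).indicator hs) ht

lemma ae_eq_of_condExp_ae_eq_indicator (hm : m ≤ mΩ) (hs : MeasurableSet s)
    (ht : MeasurableSet[m] t) (h : μ⟦s | m⟧ =ᵐ[μ] t.indicator fun _ ↦ 1) : s =ᵐ[μ] t := by
  have measureReal_inter_eq (u : Set Ω) (hu : MeasurableSet[m] u) :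
      μ.real (s ∩ u) = μ.real (t ∩ u) := by
    calc
      μ.real (s ∩ u) = ∫ ω in u, s.indicator (fun _ ↦ (1 : ℝ)) ω ∂μ := by
        simp [integral_indicator_const, hs, measureReal_restrict_apply]
      _ = ∫ ω in u, (μ⟦s | m⟧) ω ∂μ :=
        (setIntegral_condExp hm ((integrable_const 1).indicator hs) hu).symm
      _ = ∫ ω in u, t.indicator (fun _ ↦ (1 : ℝ)) ω ∂μ :=
        integral_congr_ae (ae_restrict_of_ae h)
      _ = μ.real (t ∩ u) := by
        simp [integral_indicator_const, hm t ht, measureReal_restrict_apply]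
  refine ae_eq_set.2 ⟨?_, ?_⟩
  · have h_compl := measureReal_inter_eq tᶜ ht.compl
    rw [Set.inter_compl_self, measureReal_empty, measureReal_eq_zero_iff] at h_compl
    exact h_compl
  · have h_self := measureReal_inter_eq t ht
    rw [Set.inter_self, Set.inter_comm] at h_self
    have h_split := measureReal_inter_add_sdiff (μ := μ) (s := t) hs
    exact (measureReal_eq_zero_iff (μ := μ)).1 (by linarith)

variable [StandardBorelSpace Ω] {hm : m ≤ mΩ}

lemma exists_measurableSet_ae_eq_of_condIndepSet_self (hs : MeasurableSet s)
    (h : CondIndepSet m hm s s μ) : ∃ t, MeasurableSet[m] t ∧ s =ᵐ[μ] t := by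
  have ht : MeasurableSet[m] {ω | (μ⟦s | m⟧) ω = 1} :=
    stronglyMeasurable_condExp.measurable (measurableSet_singleton 1)
  refine ⟨_, ht, ae_eq_of_condExp_ae_eq_indicator hm hs ht ?_⟩
  filter_upwards [condExp_eq_zero_or_one_of_condIndepSet_self hm hs h] with ω hω
  rcases hω with h_zero | h_one
  · simp [h_zero]
  · simp [h_one]

lemma condIndepFun_prodMk_left_of_measurable {X : Ω → α} {Z : Ω → β} {W : Ω → γ}
    (hX : Measurable X) (hZ : Measurable Z) (hW : Measurable[m] W)
    (h : CondIndepFun m hm X Z μ) : CondIndepFun m hm (fun ω ↦ (X ω, W ω)) Z μ := by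
  have hXW : Measurable fun ω ↦ (X ω, W ω) := hX.prodMk (hW.mono hm le_rfl)
  have h_rect (a : Set α) (b : Set γ) (c : Set β) (ha : MeasurableSet a) (hb : MeasurableSet b)
      (hc : MeasurableSet c) : μ⟦(X ⁻¹' a ∩ W ⁻¹' b) ∩ Z ⁻¹' c | m⟧
        =ᵐ[μ] μ⟦X ⁻¹' a ∩ W ⁻¹' b | m⟧ * μ⟦Z ⁻¹' c | m⟧ := by
    have h_mul := (condIndepFun_iff_condExp_inter_preimage_eq_mul hX hZ).1 h a c ha hc
    rw [Set.inter_right_comm]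
    filter_upwards [condExp_inter_ae_eq_indicator (μ := μ) ((hX ha).inter (hZ hc)) (hW hb),
      condExp_inter_ae_eq_indicator (μ := μ) (hX ha) (hW hb), h_mul] with ω h_left h_right h_mul
    rw [h_left, Pi.mul_apply, h_right, ← Set.indicator_mul_left]
    simp only [Set.indicator, h_mul]
  have h_gen : MeasurableSpace.comap (fun ω ↦ (X ω, W ω)) inferInstance
      = .generateFrom (Set.preimage (fun ω ↦ (X ω, W ω)) ''
        Set.image2 (· ×ˢ ·) {a | MeasurableSet a} {b | MeasurableSet b}) := by
    rw [← generateFrom_prod, MeasurableSpace.comap_generateFrom]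
  rw [condIndepFun_iff_condIndep]
  refine CondIndepSets.condIndep hXW.comap_le hZ.comap_le (isPiSystem_prod.comap _)
    (@MeasurableSpace.isPiSystem_measurableSet Ω (.comap Z inferInstance)) h_gen
    (@MeasurableSpace.generateFrom_measurableSet Ω (.comap Z inferInstance)).symm ?_
  rw [condIndepSets_iff]
  · rintro _ _ ⟨_, ⟨a, ha, b, hb, rfl⟩, rfl⟩ ⟨c, hc, rfl⟩
    exact h_rect a b c ha hb hc
  · rintro _ ⟨_, ⟨a, ha, b, hb, rfl⟩, rfl⟩
    exact hXW (ha.prod hb)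
  · exact fun _ ↦ hZ.comap_le _

end Conditioning

lemma preimage_prodMk_ae_eq {Ω α β : Type*} [MeasurableSpace Ω] [MeasurableSpace α]
    [MeasurableSpace β] {μ : Measure Ω} {U U' : Ω → α} {V V' : Ω → β}
    (hU : ∀ a, MeasurableSet a → U ⁻¹' a =ᵐ[μ] U' ⁻¹' a)
    (hV : ∀ b, MeasurableSet b → V ⁻¹' b =ᵐ[μ] V' ⁻¹' b)
    {s : Set (α × β)} (hs : MeasurableSet s) :
    (fun ω ↦ (U ω, V ω)) ⁻¹' s =ᵐ[μ] (fun ω ↦ (U' ω, V' ω)) ⁻¹' s := by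
  induction s, hs using MeasurableSpace.induction_on_inter generateFrom_prod.symm
    isPiSystem_prod with
  | empty => rfl
  | basic _ h_rect =>
    obtain ⟨a, ha, b, hb, rfl⟩ := h_rect
    exact (hU a ha).inter (hV b hb)
  | compl _ _ ih => exact ih.compl
  | iUnion _ _ _ ih =>
    simp only [Set.preimage_iUnion]
    exact Filter.EventuallyEq.countable_iUnion ih

section Prediction

variable {Ω α β γ : Type*} [MeasurableSpace Ω] [StandardBorelSpace Ω] [MeasurableSpace α]
  [MeasurableSpace β] [MeasurableSpace γ] {μ : Measure Ω} [IsFiniteMeasure μ]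
  {X X' : Ω → α} {W : Ω → γ} {f : α × γ → β}

lemma condIndepFun_self_of_condIndepFun_comp_prodMk (hX : Measurable X) (hW : Measurable W)
    (hf : Measurable f) (h : X ⟂ᵢ[W, hW; μ] (fun ω ↦ f (X ω, W ω))) :
    (fun ω ↦ f (X ω, W ω)) ⟂ᵢ[W, hW; μ] (fun ω ↦ f (X ω, W ω)) :=
  (condIndepFun_prodMk_left_of_measurable hX (hf.comp (hX.prodMk hW)) (comap_measurable W) h).comp
    hf measurable_id

lemma exists_preimage_ae_eq_preimage_snd_of_condIndepFun (hX : Measurable X) (hW : Measurable W)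
    (hf : Measurable f) (h : X ⟂ᵢ[W, hW; μ] (fun ω ↦ f (X ω, W ω)))
    {b : Set β} (hb : MeasurableSet b) :
    ∃ c, MeasurableSet c ∧ f ⁻¹' b =ᵐ[μ.map fun ω ↦ (X ω, W ω)] Prod.snd ⁻¹' c := by
  have hXW : Measurable fun ω ↦ (X ω, W ω) := hX.prodMk hW
  have h_self := (condIndepFun_iff_condIndepSet_preimage (hf.comp hXW) (hf.comp hXW)).1
    (condIndepFun_self_of_condIndepFun_comp_prodMk hX hW hf h) b b hb hb
  obtain ⟨_, ⟨c, hc, rfl⟩, h_ae⟩ :=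
    exists_measurableSet_ae_eq_of_condIndepSet_self (hf.comp hXW hb) h_self
  refine ⟨c, hc, ?_⟩
  rw [ae_eq_set, Measure.map_apply hXW ((hf hb).diff (measurable_snd hc)),
    Measure.map_apply hXW ((measurable_snd hc).diff (hf hb))]
  exact ae_eq_set.1 h_ae

lemma preimage_comp_prodMk_ae_eq_of_condIndepFun (hX : Measurable X) (hX' : Measurable X')
    (hW : Measurable W) (hf : Measurable f)
    (hac : μ.map (fun ω ↦ (X' ω, W ω)) ≪ μ.map (fun ω ↦ (X ω, W ω)))
    (h : X ⟂ᵢ[W, hW; μ] (fun ω ↦ f (X ω, W ω))) {b : Set β} (hb : MeasurableSet b) :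
    (fun ω ↦ f (X ω, W ω)) ⁻¹' b =ᵐ[μ] (fun ω ↦ f (X' ω, W ω)) ⁻¹' b := by
  obtain ⟨c, -, h_ae⟩ := exists_preimage_ae_eq_preimage_snd_of_condIndepFun hX hW hf h hb
  have hX_ae : (fun ω ↦ f (X ω, W ω)) ⁻¹' b =ᵐ[μ] W ⁻¹' c :=
    ((hX.prodMk hW).quasiMeasurePreserving μ).preimage_ae_eq h_ae
  have hX'_ae : (fun ω ↦ f (X' ω, W ω)) ⁻¹' b =ᵐ[μ] W ⁻¹' c :=
    ((hX'.prodMk hW).quasiMeasurePreserving μ).preimage_ae_eq (hac.ae_eq h_ae)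
  exact hX_ae.trans hX'_ae.symm

end Prediction

theorem rfi_theorem1_model_level_general
    {Ω Ej EW EY EYh EL : Type*} [MeasurableSpace Ω] [StandardBorelSpace Ω]
    [MeasurableSpace Ej] [MeasurableSpace EW] [MeasurableSpace EY] [MeasurableSpace EYh]
    [MeasurableSpace EL] [MeasurableSpace.CountablySeparated EL]
    (μ : Measure Ω) [IsFiniteMeasure μ]
    (Xj Xtil : Ω → Ej) (W : Ω → EW) (Y : Ω → EY)
    (hXj : Measurable Xj) (hXtil : Measurable Xtil) (hW : Measurable W)
    (f : Ej × EW → EYh) (hf : Measurable f) (L : EY × EYh → EL) (hL : Measurable L)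
    (hac : μ.map (fun ω ↦ (Xj ω, W ω)) ≪ μ.map (fun ω ↦ (Xtil ω, W ω)))
    (hne : ¬ (fun ω ↦ L (Y ω, f (Xtil ω, W ω))) =ᵐ[μ] fun ω ↦ L (Y ω, f (Xj ω, W ω))) :
    ¬ Xtil ⟂ᵢ[W, hW; μ] (fun ω ↦ f (Xtil ω, W ω)) := by
  intro h
  have h_pred (b : Set EYh) (hb : MeasurableSet b) :=
    preimage_comp_prodMk_ae_eq_of_condIndepFun hXtil hXj hW hf hac h hb
  refine hne (Filter.EventuallyEq.of_forall_separating_preimage MeasurableSet fun c hc ↦ ?_)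
  exact preimage_prodMk_ae_eq (fun _ _ ↦ .rfl) h_pred (hL hc)

/-- Model-level part of **Theorem 1**: nonzero relative feature importance implies that the
replacement variable `X̃` is not conditionally independent of the perturbed prediction
`Ŷ_rep = f(X̃, X_U, X_G)` given `(X_U, X_G)`. -/
theorem rfi_theorem1_model_level
    {Ω Ej EU EG EY EYh : Type*}
    [MeasurableSpace Ω] [StandardBorelSpace Ω] [Nonempty Ω]
    [MeasurableSpace Ej] [StandardBorelSpace Ej] [Nonempty Ej]
    [MeasurableSpace EU] [StandardBorelSpace EU] [Nonempty EU]
    [MeasurableSpace EG] [StandardBorelSpace EG] [Nonempty EG]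
    [MeasurableSpace EY] [StandardBorelSpace EY] [Nonempty EY]
    [MeasurableSpace EYh]
    (μ : Measure Ω) [IsProbabilityMeasure μ]
    (Xj Xtil : Ω → Ej) (XU : Ω → EU) (XG : Ω → EG) (Y : Ω → EY)
    (hXj : Measurable Xj) (hXtil : Measurable Xtil)
    (hXU : Measurable XU) (hXG : Measurable XG) (hY : Measurable Y)
    (f : Ej × EU × EG → EYh) (hf : Measurable f)
    (L : EY × EYh → ℝ) (hL : Measurable L)
    (hint : Integrable (fun ω => L (Y ω, f (Xj ω, XU ω, XG ω))) μ)
    (hint' : Integrable (fun ω => L (Y ω, f (Xtil ω, XU ω, XG ω))) μ)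
    -- (i) the conditional distribution of `X̃` given `X_G` equals that of `X_j` given `X_G`
    (hrep : ∀ᵐ g ∂(μ.map XG), condDistrib Xtil XG μ g = condDistrib Xj XG μ g)
    -- (ii) `X̃` is conditionally independent of `(X_U, Y)` given `X_G`
    (hci : CondIndepFun (MeasurableSpace.comap XG inferInstance) hXG.comap_le Xtil
      (fun ω => (XU ω, Y ω)) μ)
    -- every observationally possible feature value is interventionally possible
    (hac : μ.map (fun ω => (Xj ω, XU ω, XG ω)) ≪ μ.map (fun ω => (Xtil ω, XU ω, XG ω)))
    -- nonzero relative feature importance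
    (hRFI : (∫ ω, L (Y ω, f (Xtil ω, XU ω, XG ω)) ∂μ)
      - (∫ ω, L (Y ω, f (Xj ω, XU ω, XG ω)) ∂μ) ≠ 0) :
    ¬ CondIndepFun
      (MeasurableSpace.comap (fun ω => (XU ω, XG ω)) inferInstance)
      ((hXU.prodMk hXG).comap_le) Xtil (fun ω => f (Xtil ω, XU ω, XG ω)) μ := by
  refine rfi_theorem1_model_level_general μ Xj Xtil (fun ω ↦ (XU ω, XG ω)) Y hXj hXtil
    (hXU.prodMk hXG) f hf L hL hac fun h_loss ↦ hRFI ?_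
  exact sub_eq_zero.2 (integral_congr_ae h_loss)
end

section
/- Let X̃ be a replacement variable for X_j relative to G whose conditional independence condition is strengthened to: X̃ is conditionally independent of (X_UU, X_N, Y) given X_G; and let X̃' be a replacement variable for X_j relative to (G, N), i.e. condDistrib X̃' (X_G, X_N) μ = condDistrib X_j (X_G, X_N) μ almost everywhere and X̃' is conditionally independent of (X_UU, Y) given (X_G, X_N). Define RFI_j^G = ∫ L(Y, f(X̃, X_UU, X_N, X_G)) dμ − R and RFI_j^{G∪N} = ∫ L(Y, f(X̃', X_UU, X_N, X_G)) dμ − R, where R = ∫ L(Y, f(X_j, X_UU, X_N, X_G)) dμ. If RFI_j^G − RFI_j^{G∪N} ≠ 0, then X_j is NOT conditionally independent of X_N given X_G. -/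
open MeasureTheory ProbabilityTheory
open scoped ProbabilityTheory

/-!
Suppose `X_j` is conditionally independent of `X_N` given `X_G`. Then the conditional law of `X_j`
given `(X_G, X_N)` is already its conditional law given `X_G`. So `X̃'`, which is drawn from the
former, depends on the remaining data only through `X_G`: it is itself a replacement variable
relative to `G` in the strengthened sense satisfied by `X̃`. Such a replacement has a uniquely
determined joint law with the data, so the two expected losses coincide.
-/

section CondDistrib

variable {Ω E F G : Type*} [MeasurableSpace Ω] [MeasurableSpace E] [MeasurableSpace F]
  [MeasurableSpace G]

lemma map_prodMap_compProd_comap (ν : Measure F) [SFinite ν] (κ : Kernel G E) [IsSFiniteKernel κ]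
    {g : F → G} (hg : Measurable g) :
    (ν ⊗ₘ κ.comap g hg).map (Prod.map g id) = ν.map g ⊗ₘ κ := by
  have hgid : Measurable (Prod.map g (id : E → E)) := hg.prodMap measurable_id
  ext s hs
  rw [Measure.map_apply hgid hs, Measure.compProd_apply (hgid hs),
    Measure.compProd_apply hs, lintegral_map (Kernel.measurable_kernel_prodMk_left hs) hg]
  rfl

variable {μ : Measure Ω}

lemma prodMkRight_ae_eq_map_prodMk {κ η : Kernel G E} {C : Ω → G} {W : Ω → F}
    (hC : Measurable C) (hW : Measurable W) (h : κ =ᵐ[μ.map C] η) :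
    κ.prodMkRight F =ᵐ[μ.map (fun ω ↦ (C ω, W ω))] η.prodMkRight F := by
  have hfst : (μ.map (fun ω ↦ (C ω, W ω))).map Prod.fst = μ.map C :=
    Measure.map_map measurable_fst (hC.prodMk hW)
  exact ae_of_ae_map measurable_fst.aemeasurable (hfst ▸ h)

lemma condDistrib_comp_ae_eq_of_ae_eq_comap
    [StandardBorelSpace E] [Nonempty E] [IsFiniteMeasure μ]
    {Z : Ω → E} {T : Ω → F} {g : F → G} {κ : Kernel G E} [IsFiniteKernel κ]
    (hZ : Measurable Z) (hT : Measurable T) (hg : Measurable g)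
    (h : condDistrib Z T μ =ᵐ[μ.map T] κ.comap g hg) :
    condDistrib Z (g ∘ T) μ =ᵐ[μ.map (g ∘ T)] κ := by
  refine condDistrib_ae_eq_of_measure_eq_compProd _ hZ.aemeasurable ?_
  calc μ.map (fun ω ↦ ((g ∘ T) ω, Z ω))
      = (μ.map (fun ω ↦ (T ω, Z ω))).map (Prod.map g id) :=
        (Measure.map_map (hg.prodMap measurable_id) (hT.prodMk hZ)).symm
    _ = (μ.map T ⊗ₘ κ.comap g hg).map (Prod.map g id) := by
        rw [← compProd_map_condDistrib hZ.aemeasurable, Measure.compProd_congr h]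
    _ = μ.map (g ∘ T) ⊗ₘ κ := by
        rw [map_prodMap_compProd_comap, Measure.map_map hg hT]

end CondDistrib

section Replacement

variable {Ω E F G N : Type*} [MeasurableSpace Ω] [StandardBorelSpace Ω]
  [MeasurableSpace E] [StandardBorelSpace E] [Nonempty E]
  [MeasurableSpace F] [MeasurableSpace G] [MeasurableSpace N]

/-- `Z` is a replacement variable for `X` relative to `C`: it has the conditional law of `X` given
`C`, but conditionally on `C` it carries no information about the remaining data `W`. -/
structure IsReplacement (Z X : Ω → E) (W : Ω → F) (C : Ω → G) (hC : Measurable C)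
    (μ : Measure Ω) [IsFiniteMeasure μ] : Prop where
  condDistrib_ae_eq : condDistrib Z C μ =ᵐ[μ.map C] condDistrib X C μ
  condIndepFun : Z ⟂ᵢ[C, hC; μ] W

variable {μ : Measure Ω} [IsFiniteMeasure μ]
  {X Z Z' : Ω → E} {W : Ω → F} {C : Ω → G} {V : Ω → N}

lemma IsReplacement.comp {F' : Type*} [MeasurableSpace F'] {hC : Measurable C}
    (h : IsReplacement Z X W C hC μ) {φ : F → F'} (hφ : Measurable φ) :
    IsReplacement Z X (φ ∘ W) C hC μ :=
  ⟨h.condDistrib_ae_eq, h.condIndepFun.comp measurable_id hφ⟩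

variable [StandardBorelSpace F] [Nonempty F]

lemma isReplacement_iff_condDistrib_prodMk_ae_eq (hZ : Measurable Z) (hW : Measurable W)
    (hC : Measurable C) :
    IsReplacement Z X W C hC μ ↔
      condDistrib Z (fun ω ↦ (C ω, W ω)) μ =ᵐ[μ.map (fun ω ↦ (C ω, W ω))]
        (condDistrib X C μ).prodMkRight F := by
  have condIndepFun_iff := condIndepFun_iff_condDistrib_prod_ae_eq_prodMkRight (μ := μ) hZ hW hC
  constructor
  · intro h
    exact (condIndepFun_iff.1 h.condIndepFun.symm).trans
      (prodMkRight_ae_eq_map_prodMk hC hW h.condDistrib_ae_eq)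
  · intro h
    have hZX : condDistrib Z C μ =ᵐ[μ.map C] condDistrib X C μ :=
      condDistrib_comp_ae_eq_of_ae_eq_comap (g := Prod.fst) hZ (hC.prodMk hW) measurable_fst h
    exact ⟨hZX, (condIndepFun_iff.2
      (h.trans (prodMkRight_ae_eq_map_prodMk hC hW hZX.symm))).symm⟩

namespace IsReplacement

lemma identDistrib {hC : Measurable C} (h : IsReplacement Z X W C hC μ)
    (h' : IsReplacement Z' X W C hC μ) (hZ : Measurable Z) (hZ' : Measurable Z')
    (hW : Measurable W) :
    IdentDistrib (fun ω ↦ ((C ω, W ω), Z ω)) (fun ω ↦ ((C ω, W ω), Z' ω)) μ μ where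
  aemeasurable_fst := by fun_prop
  aemeasurable_snd := by fun_prop
  map_eq := by
    have hcond := (isReplacement_iff_condDistrib_prodMk_ae_eq hZ hW hC).1 h
    have hcond' := (isReplacement_iff_condDistrib_prodMk_ae_eq hZ' hW hC).1 h'
    rw [← compProd_map_condDistrib hZ.aemeasurable, ← compProd_map_condDistrib hZ'.aemeasurable,
      Measure.compProd_congr (hcond.trans hcond'.symm)]

lemma of_prodMk_of_condIndepFun [StandardBorelSpace N] [Nonempty N] {hC : Measurable C}
    (hV : Measurable V) (h : IsReplacement Z X W (fun ω ↦ (C ω, V ω)) (hC.prodMk hV) μ)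
    (hXV : X ⟂ᵢ[C, hC; μ] V) (hX : Measurable X) (hZ : Measurable Z) (hW : Measurable W) :
    IsReplacement Z X (fun ω ↦ (V ω, W ω)) C hC μ := by
  rw [isReplacement_iff_condDistrib_prodMk_ae_eq hZ (hV.prodMk hW) hC]
  have hXCV : condDistrib X (fun ω ↦ (C ω, V ω)) μ =ᵐ[μ.map (fun ω ↦ (C ω, V ω))]
      (condDistrib X C μ).prodMkRight N :=
    (condIndepFun_iff_condDistrib_prod_ae_eq_prodMkRight hX hV hC).1 hXV.symm
  have hZCVW : condDistrib Z (fun ω ↦ ((C ω, V ω), W ω)) μ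
      =ᵐ[μ.map (fun ω ↦ ((C ω, V ω), W ω))] ((condDistrib X C μ).prodMkRight N).prodMkRight F :=
    ((isReplacement_iff_condDistrib_prodMk_ae_eq hZ hW _).1 h).trans
      (prodMkRight_ae_eq_map_prodMk (hC.prodMk hV) hW hXCV)
  exact condDistrib_comp_ae_eq_of_ae_eq_comap hZ ((hC.prodMk hV).prodMk hW)
    MeasurableEquiv.prodAssoc.measurable hZCVW

end IsReplacement

end Replacement

theorem rfi_theorem2_general
    {Ω Ej EUU EN EG EY : Type*}
    [MeasurableSpace Ω] [StandardBorelSpace Ω]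
    [MeasurableSpace Ej] [StandardBorelSpace Ej] [Nonempty Ej]
    [MeasurableSpace EUU] [StandardBorelSpace EUU] [Nonempty EUU]
    [MeasurableSpace EN] [StandardBorelSpace EN] [Nonempty EN]
    [MeasurableSpace EG]
    [MeasurableSpace EY] [StandardBorelSpace EY] [Nonempty EY]
    {μ : Measure Ω} [IsFiniteMeasure μ]
    {Xj Xtil Xtil' : Ω → Ej} {XUU : Ω → EUU} {XN : Ω → EN} {XG : Ω → EG} {Y : Ω → EY}
    (hXj : Measurable Xj) (hXtil : Measurable Xtil) (hXtil' : Measurable Xtil')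
    (hXUU : Measurable XUU) (hXN : Measurable XN) (hXG : Measurable XG) (hY : Measurable Y)
    (hrep : IsReplacement Xtil Xj (fun ω ↦ (XUU ω, XN ω, Y ω)) XG hXG μ)
    (hrep' : IsReplacement Xtil' Xj (fun ω ↦ (XUU ω, Y ω)) (fun ω ↦ (XG ω, XN ω))
      (hXG.prodMk hXN) μ)
    (hind : Xj ⟂ᵢ[XG, hXG; μ] XN) :
    IdentDistrib (fun ω ↦ (Y ω, Xtil ω, XUU ω, XN ω, XG ω))
      (fun ω ↦ (Y ω, Xtil' ω, XUU ω, XN ω, XG ω)) μ μ := by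
  have hrepG : IsReplacement Xtil' Xj (fun ω ↦ (XUU ω, XN ω, Y ω)) XG hXG μ :=
    (IsReplacement.of_prodMk_of_condIndepFun hXN hrep' hind hXj hXtil' (hXUU.prodMk hY)).comp
      (φ := fun p ↦ (p.2.1, p.1, p.2.2)) (by fun_prop)
  exact (hrep.identDistrib hrepG hXtil hXtil' (by fun_prop)).comp
    (u := fun p ↦ (p.1.2.2.2, p.2, p.1.2.1, p.1.2.2.1, p.1.1)) (by fun_prop)

/-- **Theorem 2**: a nonzero change in relative feature importance when enlarging the conditioning
set from `G` to `G ∪ N` implies that `X_j` is not conditionally independent of `X_N`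
given `X_G`. -/
theorem rfi_theorem2
    {Ω Ej EUU EN EG EY EYh : Type*}
    [MeasurableSpace Ω] [StandardBorelSpace Ω] [Nonempty Ω]
    [MeasurableSpace Ej] [StandardBorelSpace Ej] [Nonempty Ej]
    [MeasurableSpace EUU] [StandardBorelSpace EUU] [Nonempty EUU]
    [MeasurableSpace EN] [StandardBorelSpace EN] [Nonempty EN]
    [MeasurableSpace EG] [StandardBorelSpace EG] [Nonempty EG]
    [MeasurableSpace EY] [StandardBorelSpace EY] [Nonempty EY]
    [MeasurableSpace EYh]
    (μ : Measure Ω) [IsProbabilityMeasure μ]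
    (Xj Xtil Xtil' : Ω → Ej) (XUU : Ω → EUU) (XN : Ω → EN) (XG : Ω → EG) (Y : Ω → EY)
    (hXj : Measurable Xj) (hXtil : Measurable Xtil) (hXtil' : Measurable Xtil')
    (hXUU : Measurable XUU) (hXN : Measurable XN) (hXG : Measurable XG) (hY : Measurable Y)
    (f : Ej × EUU × EN × EG → EYh) (hf : Measurable f)
    (L : EY × EYh → ℝ) (hL : Measurable L)
    (hint : Integrable (fun ω => L (Y ω, f (Xj ω, XUU ω, XN ω, XG ω))) μ)
    (hint' : Integrable (fun ω => L (Y ω, f (Xtil ω, XUU ω, XN ω, XG ω))) μ)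
    (hint'' : Integrable (fun ω => L (Y ω, f (Xtil' ω, XUU ω, XN ω, XG ω))) μ)
    -- `X̃` is a replacement variable for `X_j` relative to `G` (strengthened version):
    (hrep : ∀ᵐ g ∂(μ.map XG), condDistrib Xtil XG μ g = condDistrib Xj XG μ g)
    (hci : CondIndepFun (MeasurableSpace.comap XG inferInstance) hXG.comap_le Xtil
      (fun ω => (XUU ω, XN ω, Y ω)) μ)
    -- `X̃'` is a replacement variable for `X_j` relative to `(G, N)`:
    (hrep' : ∀ᵐ p ∂(μ.map (fun ω => (XG ω, XN ω))),
      condDistrib Xtil' (fun ω => (XG ω, XN ω)) μ p = condDistrib Xj (fun ω => (XG ω, XN ω)) μ p)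
    (hci' : CondIndepFun
      (MeasurableSpace.comap (fun ω => (XG ω, XN ω)) inferInstance)
      ((hXG.prodMk hXN).comap_le) Xtil' (fun ω => (XUU ω, Y ω)) μ)
    -- nonzero difference `RFI_j^G − RFI_j^{G ∪ N}`
    (hΔRFI : ((∫ ω, L (Y ω, f (Xtil ω, XUU ω, XN ω, XG ω)) ∂μ)
        - (∫ ω, L (Y ω, f (Xj ω, XUU ω, XN ω, XG ω)) ∂μ))
      - ((∫ ω, L (Y ω, f (Xtil' ω, XUU ω, XN ω, XG ω)) ∂μ)
        - (∫ ω, L (Y ω, f (Xj ω, XUU ω, XN ω, XG ω)) ∂μ)) ≠ 0) :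
    ¬ CondIndepFun (MeasurableSpace.comap XG inferInstance) hXG.comap_le Xj XN μ := by
  intro hind
  have hlaw := rfi_theorem2_general hXj hXtil hXtil' hXUU hXN hXG hY ⟨hrep, hci⟩ ⟨hrep', hci'⟩ hind
  have hloss := hlaw.comp (u := fun p ↦ L (p.1, f p.2)) (by fun_prop)
  exact hΔRFI (sub_eq_zero.2 (congrArg (· - _) hloss.integral_eq))
end
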